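/- For each n ≥ 1, let (X_n, M_n) be a random element of the space C([0,∞), ℝ^k) × C([0,∞), ℝ) of continuous paths, equipped with the topology of uniform convergence on compact intervals, such that M_n is a martingale with respect to the filtration (F_{n,t})_{t≥0} generated by (X_n, M_n), i.e., F_{n,t} = σ(X_n(s), M_n(s) : 0 ≤ s ≤ t). Suppose (X_n, M_n) ⇒ (X, M), i.e., the laws converge weakly on C([0,∞), ℝ^{k+1}), and suppose that for each t ≥ 0 the family {M_n(t) : n ≥ 1} is uniformly integrable. Then M is a martingale with respect to the filtration generated by (X, M). -/

import Mathlib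

open MeasureTheory Filter Topology Set
open scoped ENNReal NNReal

open TopologicalSpace BoundedContinuousFunction

/-!
Test the martingale identity against bounded continuous functions `g` of finitely many values of
the process before time `s`: `𝔼[g · Mₙ(t)] = 𝔼[g · Mₙ(s)]`. Convergence in distribution together
with uniform integrability gives convergence of expectations, so the identity passes to the limit.
The functions `g` determine finite measures on the path space, and applying this to the measures
with densities `d⁺` and `d⁻`, where `d = M(t) - M(s)`, shows that `d` integrates to zero over every
event of the past.
-/

section Clamp

/-- Truncation of a real number to `[-K, K]`. Unlike `ProbabilityTheory.truncation` it is
continuous, hence usable as a test function for weak convergence. -/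
def clamp (K x : ℝ) : ℝ := max (-K) (min x K)

lemma continuous_clamp (K : ℝ) : Continuous (clamp K) := by
  unfold clamp; fun_prop

variable {K x : ℝ}

lemma abs_clamp_le (hK : 0 ≤ K) (x : ℝ) : |clamp K x| ≤ K :=
  abs_le.2 ⟨le_max_left _ _, max_le (by linarith) (min_le_right _ _)⟩

lemma clamp_of_abs_le (h : |x| ≤ K) : clamp K x = x := by
  rw [clamp, min_eq_left (abs_le.1 h).2, max_eq_right (abs_le.1 h).1]

lemma abs_clamp_le_abs (hK : 0 ≤ K) (x : ℝ) : |clamp K x| ≤ |x| := by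
  rcases le_total |x| K with h | h
  · rw [clamp_of_abs_le h]
  · exact (abs_clamp_le hK x).trans h

lemma abs_sub_clamp_le_abs (hK : 0 ≤ K) (x : ℝ) : |x - clamp K x| ≤ |x| := by
  unfold clamp; grind

lemma tendsto_clamp_atTop (x : ℝ) : Tendsto (fun K => clamp K x) atTop (𝓝 x) :=
  tendsto_const_nhds.congr' <| (eventually_ge_atTop |x|).mono fun _ h => (clamp_of_abs_le h).symm

end Clamp

section ClampIntegral

variable {Ω : Type*} [MeasurableSpace Ω] {P : Measure Ω} {Y : Ω → ℝ} {K : ℝ}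

lemma integrable_clamp (hY : Integrable Y P) (hK : 0 ≤ K) :
    Integrable (fun ω => clamp K (Y ω)) P :=
  hY.mono ((continuous_clamp K).comp_aestronglyMeasurable hY.1)
    (ae_of_all _ fun ω => abs_clamp_le_abs hK (Y ω))

lemma abs_integral_sub_integral_clamp_le {c : ℝ} (hY : Integrable Y P) (hK : 0 ≤ K) (hcK : c ≤ K) :
    |∫ ω, Y ω ∂P - ∫ ω, clamp K (Y ω) ∂P| ≤ ∫ ω in {ω | c ≤ |Y ω|}, |Y ω| ∂P := by
  have htail : NullMeasurableSet {ω | c ≤ |Y ω|} P :=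
    nullMeasurableSet_le aemeasurable_const hY.abs.aemeasurable
  rw [← integral_sub hY (integrable_clamp hY hK), ← integral_indicator₀ htail,
    ← Real.norm_eq_abs]
  refine norm_integral_le_of_norm_le (hY.abs.indicator₀ htail) (ae_of_all _ fun ω => ?_)
  by_cases hω : ω ∈ {ω | c ≤ |Y ω|}
  · rw [indicator_of_mem hω]
    exact abs_sub_clamp_le_abs hK (Y ω)
  · rw [indicator_of_notMem hω, clamp_of_abs_le ((not_le.1 hω).le.trans hcK), sub_self, norm_zero]

lemma integral_abs_le_add_setIntegral [IsProbabilityMeasure P] {c : ℝ} (hY : Integrable Y P)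
    (hc : 0 ≤ c) : ∫ ω, |Y ω| ∂P ≤ c + ∫ ω in {ω | c ≤ |Y ω|}, |Y ω| ∂P := by
  have herror := abs_integral_sub_integral_clamp_le hY.abs hc le_rfl
  have hclamp : ∫ ω, clamp c |Y ω| ∂P ≤ c := by
    simpa using integral_mono (integrable_clamp hY.abs hc) (integrable_const c)
      fun ω => (le_abs_self _).trans (abs_clamp_le hc |Y ω|)
  simp only [abs_abs] at herror
  linarith [le_abs_self (∫ ω, |Y ω| ∂P - ∫ ω, clamp c |Y ω| ∂P)]

lemma tendsto_integral_clamp_atTop (hY : Integrable Y P) :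
    Tendsto (fun K => ∫ ω, clamp K (Y ω) ∂P) atTop (𝓝 (∫ ω, Y ω ∂P)) := by
  refine tendsto_integral_filter_of_dominated_convergence (fun ω => |Y ω|) ?_ ?_ hY.abs
    (ae_of_all _ fun ω => tendsto_clamp_atTop (Y ω))
  · exact .of_forall fun K => (continuous_clamp K).comp_aestronglyMeasurable hY.1
  · filter_upwards [eventually_ge_atTop 0] with K hK
    exact ae_of_all _ fun ω => abs_clamp_le_abs hK (Y ω)

lemma integrable_of_forall_integral_abs_clamp_le [IsFiniteMeasure P] {B : ℝ}
    (hY : AEStronglyMeasurable Y P)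
    (hB : ∀ K, 0 ≤ K → ∫ ω, |clamp K (Y ω)| ∂P ≤ B) : Integrable Y P := by
  have hclamp_meas (K : ℝ) : AEStronglyMeasurable (fun ω => clamp K (Y ω)) P :=
    (continuous_clamp K).comp_aestronglyMeasurable hY
  have hbound (m : ℕ) : ∫⁻ ω, ‖clamp m (Y ω)‖ₑ ∂P ≤ ENNReal.ofReal B := by
    have hclamp_int : Integrable (fun ω => clamp m (Y ω)) P :=
      .of_bound (hclamp_meas m) m (ae_of_all _ fun ω => abs_clamp_le m.cast_nonneg (Y ω))
    rw [← ofReal_integral_norm_eq_lintegral_enorm hclamp_int]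
    exact ENNReal.ofReal_le_ofReal (hB m m.cast_nonneg)
  have hfatou : ∫⁻ ω, ‖Y ω‖ₑ ∂P ≤ liminf (fun m : ℕ => ∫⁻ ω, ‖clamp m (Y ω)‖ₑ ∂P) atTop := by
    have hlim (ω : Ω) : liminf (fun m : ℕ => ‖clamp m (Y ω)‖ₑ) atTop = ‖Y ω‖ₑ :=
      ((tendsto_clamp_atTop (Y ω)).comp tendsto_natCast_atTop_atTop).enorm.liminf_eq
    simpa only [hlim] using
      lintegral_liminf_le' (u := atTop) fun m : ℕ => (hclamp_meas m).enorm
  refine ⟨hY, (hfatou.trans ?_).trans_lt (ENNReal.ofReal_lt_top (r := B))⟩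
  exact liminf_le_of_le (by isBoundedDefault) fun b hb =>
    let ⟨m, hm⟩ := hb.exists; hm.trans (hbound m)

end ClampIntegral

section ConvergenceInDistribution

variable {ι : Type*} {l : Filter ι} {Ω : ι → Type*} [∀ i, MeasurableSpace (Ω i)]
  {P : ∀ i, Measure (Ω i)} {Ω₀ : Type*} [MeasurableSpace Ω₀] {P₀ : Measure Ω₀}

/-- Asymptotic uniform integrability along `l` of random variables that may live on different
probability spaces, in contrast to `MeasureTheory.UniformIntegrable`. Integrability of each `Y i`
is not part of the notion and has to be assumed separately: the Bochner integral of a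
non-integrable tail is `0`. -/
def AsymptoticallyUniformIntegrable (Y : ∀ i, Ω i → ℝ) (l : Filter ι)
    (P : ∀ i, Measure (Ω i)) : Prop :=
  ∀ ε : ℝ, 0 < ε → ∃ c : ℝ, ∀ᶠ i in l, ∫ ω in {ω | c ≤ |Y i ω|}, |Y i ω| ∂P i ≤ ε

namespace AsymptoticallyUniformIntegrable

variable {Y : ∀ i, Ω i → ℝ}

lemma exists_eventually_integral_abs_le [∀ i, IsProbabilityMeasure (P i)]
    (hY : AsymptoticallyUniformIntegrable Y l P) (hint : ∀ i, Integrable (Y i) (P i)) :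
    ∃ B, ∀ᶠ i in l, ∫ ω, |Y i ω| ∂P i ≤ B := by
  obtain ⟨c, hc⟩ := hY 1 one_pos
  refine ⟨max c 0 + 1, hc.mono fun i hi => ?_⟩
  have htail_anti : ∫ ω in {ω | max c 0 ≤ |Y i ω|}, |Y i ω| ∂P i
      ≤ ∫ ω in {ω | c ≤ |Y i ω|}, |Y i ω| ∂P i :=
    setIntegral_mono_set (hint i).abs.integrableOn (ae_of_all _ fun _ => abs_nonneg _)
      (Eventually.of_forall fun _ => (le_max_left c 0).trans)
  linarith [integral_abs_le_add_setIntegral (hint i) (le_max_right c 0)]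

lemma bdd_mul {G : ∀ i, Ω i → ℝ} {C : ℝ}
    (hY : AsymptoticallyUniformIntegrable Y l P) (hint : ∀ i, Integrable (Y i) (P i))
    (hG : ∀ i ω, |G i ω| ≤ C) :
    AsymptoticallyUniformIntegrable (fun i ω => G i ω * Y i ω) l P := by
  intro ε hε
  set D := max C 1
  have hD : 0 < D := zero_lt_one.trans_le (le_max_right C 1)
  have hGY (i) (ω : Ω i) : |G i ω * Y i ω| ≤ D * |Y i ω| := by
    rw [abs_mul]
    exact mul_le_mul_of_nonneg_right ((hG i ω).trans (le_max_left C 1)) (abs_nonneg _)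
  obtain ⟨c, hc⟩ := hY (ε / D) (by positivity)
  refine ⟨D * c, hc.mono fun i hi => ?_⟩
  have htail : {ω | D * c ≤ |G i ω * Y i ω|} ⊆ {ω | c ≤ |Y i ω|} := fun ω hω =>
    le_of_mul_le_mul_left (hω.trans (hGY i ω)) hD
  calc ∫ ω in {ω | D * c ≤ |G i ω * Y i ω|}, |G i ω * Y i ω| ∂P i
      ≤ ∫ ω in {ω | D * c ≤ |G i ω * Y i ω|}, D * |Y i ω| ∂P i :=
        integral_mono_of_nonneg (ae_of_all _ fun _ => abs_nonneg _)
          ((hint i).abs.const_mul D).integrableOn (ae_of_all _ fun ω => hGY i ω)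
    _ ≤ ∫ ω in {ω | c ≤ |Y i ω|}, D * |Y i ω| ∂P i :=
        setIntegral_mono_set ((hint i).abs.const_mul D).integrableOn
          (ae_of_all _ fun _ => mul_nonneg hD.le (abs_nonneg _)) htail.eventuallyLE
    _ = D * ∫ ω in {ω | c ≤ |Y i ω|}, |Y i ω| ∂P i := integral_const_mul _ _
    _ ≤ ε := by rwa [← le_div_iff₀' hD]

lemma tendstoUniformlyOnFilter_integral_clamp
    (hY : AsymptoticallyUniformIntegrable Y l P) (hint : ∀ i, Integrable (Y i) (P i)) :
    TendstoUniformlyOnFilter (fun K i => ∫ ω, clamp K (Y i ω) ∂P i) (fun i => ∫ ω, Y i ω ∂P i)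
      atTop l := by
  rw [Metric.tendstoUniformlyOnFilter_iff]
  intro ε hε
  obtain ⟨c, hc⟩ := hY (ε / 2) (half_pos hε)
  filter_upwards [((eventually_ge_atTop 0).and (eventually_ge_atTop c)).prod_mk hc]
    with ⟨K, i⟩ ⟨⟨hK, hcK⟩, htail⟩
  rw [Real.dist_eq]
  linarith [abs_integral_sub_integral_clamp_le (hint i) hK hcK]

end AsymptoticallyUniformIntegrable

variable [∀ i, IsProbabilityMeasure (P i)] [IsProbabilityMeasure P₀]

lemma tendstoInDistribution_iff_forall_integral_tendsto {E : Type*} [TopologicalSpace E]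
    [MeasurableSpace E] [OpensMeasurableSpace E] {Y : ∀ i, Ω i → E} {Y₀ : Ω₀ → E}
    (hY : ∀ i, AEMeasurable (Y i) (P i)) (hY₀ : AEMeasurable Y₀ P₀) :
    TendstoInDistribution Y l Y₀ P P₀ ↔
      ∀ f : E →ᵇ ℝ, Tendsto (fun i => ∫ ω, f (Y i ω) ∂P i) l (𝓝 (∫ ω, f (Y₀ ω) ∂P₀)) := by
  have hf_meas (f : E →ᵇ ℝ) {μ : Measure E} : AEStronglyMeasurable f μ :=
    f.continuous.measurable.aestronglyMeasurable
  refine ⟨fun h f => ?_, fun h => ⟨hY, hY₀, ?_⟩⟩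
  · simpa [integral_map (hY _) (hf_meas f), integral_map hY₀ (hf_meas f)]
      using ProbabilityMeasure.tendsto_iff_forall_integral_tendsto.1 h.tendsto f
  · refine ProbabilityMeasure.tendsto_iff_forall_integral_tendsto.2 fun f => ?_
    simpa [integral_map (hY _) (hf_meas f), integral_map hY₀ (hf_meas f)] using h f

lemma tendstoInDistribution_comp_of_forall_integral_tendsto {S E : Type*} [TopologicalSpace S]
    [TopologicalSpace E] [MeasurableSpace E] [OpensMeasurableSpace E]
    {W : ∀ i, Ω i → S} {W₀ : Ω₀ → S}
    (hconv : ∀ f : S →ᵇ ℝ,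
      Tendsto (fun i => ∫ ω, f (W i ω) ∂P i) l (𝓝 (∫ ω, f (W₀ ω) ∂P₀)))
    {F : S → E} (hF : Continuous F) (hFW : ∀ i, AEMeasurable (fun ω => F (W i ω)) (P i))
    (hFW₀ : AEMeasurable (fun ω => F (W₀ ω)) P₀) :
    TendstoInDistribution (fun i ω => F (W i ω)) l (fun ω => F (W₀ ω)) P P₀ :=
  (tendstoInDistribution_iff_forall_integral_tendsto hFW hFW₀).2
    fun f => hconv (f.compContinuous ⟨F, hF⟩)

lemma tendsto_integral_comp_of_tendstoInDistribution {E : Type*} [TopologicalSpace E]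
    [MeasurableSpace E] [OpensMeasurableSpace E] {Y : ∀ i, Ω i → E} {Y₀ : Ω₀ → E}
    (hY : TendstoInDistribution Y l Y₀ P P₀) {f : E → ℝ} {C : ℝ} (hf : Continuous f)
    (hfC : ∀ x, |f x| ≤ C) :
    Tendsto (fun i => ∫ ω, f (Y i ω) ∂P i) l (𝓝 (∫ ω, f (Y₀ ω) ∂P₀)) :=
  (tendstoInDistribution_iff_forall_integral_tendsto hY.forall_aemeasurable
    hY.aemeasurable_limit).1 hY (.ofNormedAddCommGroup f hf C hfC)

variable {Y : ∀ i, Ω i → ℝ} {Y₀ : Ω₀ → ℝ}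

lemma integrable_of_tendstoInDistribution [l.NeBot] (hY : TendstoInDistribution Y l Y₀ P P₀)
    (hint : ∀ i, Integrable (Y i) (P i)) (hUI : AsymptoticallyUniformIntegrable Y l P) :
    Integrable Y₀ P₀ := by
  obtain ⟨B, hB⟩ := hUI.exists_eventually_integral_abs_le hint
  refine integrable_of_forall_integral_abs_clamp_le (B := B)
    hY.aemeasurable_limit.aestronglyMeasurable fun K hK => ?_
  have hlim := tendsto_integral_comp_of_tendstoInDistribution hY (continuous_clamp K).abs
    fun x => (abs_abs _).trans_le (abs_clamp_le hK x)
  refine le_of_tendsto hlim (hB.mono fun i hi => hi.trans' ?_)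
  exact integral_mono_of_nonneg (ae_of_all _ fun _ => abs_nonneg _) (hint i).abs
    (ae_of_all _ fun ω => abs_clamp_le_abs hK (Y i ω))

theorem tendsto_integral_of_tendstoInDistribution [l.NeBot]
    (hY : TendstoInDistribution Y l Y₀ P P₀) (hint : ∀ i, Integrable (Y i) (P i))
    (hUI : AsymptoticallyUniformIntegrable Y l P) :
    Tendsto (fun i => ∫ ω, Y i ω ∂P i) l (𝓝 (∫ ω, Y₀ ω ∂P₀)) :=
  (hUI.tendstoUniformlyOnFilter_integral_clamp hint).tendsto_of_eventually_tendsto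
    ((eventually_ge_atTop 0).mono fun K hK =>
      tendsto_integral_comp_of_tendstoInDistribution hY (continuous_clamp K) (abs_clamp_le hK))
    (tendsto_integral_clamp_atTop (integrable_of_tendstoInDistribution hY hint hUI))

end ConvergenceInDistribution

section CylinderFunctions

variable {T E : Type*} [TopologicalSpace E] [PseudoMetrizableSpace E] [SecondCountableTopology E]
  [MeasurableSpace E] [BorelSpace E]

lemma ext_of_forall_integral_restrict_eq {μ ν : Measure (T → E)} [IsFiniteMeasure μ]
    [IsFiniteMeasure ν]
    (h : ∀ (I : Finset T) (g : (I → E) →ᵇ ℝ),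
      ∫ x, g (I.restrict x) ∂μ = ∫ x, g (I.restrict x) ∂ν) : μ = ν := by
  refine IsProjectiveLimit.unique (P := fun I : Finset T => ν.map I.restrict) (fun I => ?_)
    fun _ => rfl
  refine ext_of_forall_integral_eq_of_IsFiniteMeasure fun g => ?_
  have hrestrict : Measurable (I.restrict (π := fun _ : T => E)) := I.measurable_restrict
  have hg (ρ : Measure (I → E)) : AEStronglyMeasurable g ρ :=
    g.continuous.measurable.aestronglyMeasurable
  rw [integral_map hrestrict.aemeasurable (hg _), integral_map hrestrict.aemeasurable (hg _), h I g]

variable {Ω : Type*} {m₀ : MeasurableSpace Ω} {P : Measure Ω} {a b : Ω → ℝ}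

lemma integral_withDensity_ofReal_sub_integral_withDensity_ofReal_neg {f d : Ω → ℝ} {C : ℝ}
    (hf : AEStronglyMeasurable f P) (hfC : ∀ ω, |f ω| ≤ C) (hd : Integrable d P) :
    ∫ ω, f ω ∂P.withDensity (fun ω => ENNReal.ofReal (d ω))
      - ∫ ω, f ω ∂P.withDensity (fun ω => ENNReal.ofReal (-d ω)) = ∫ ω, f ω * d ω ∂P := by
  have hdensity (e : Ω → ℝ) (he : Integrable e P) :
      ∫ ω, f ω ∂P.withDensity (fun ω => ENNReal.ofReal (e ω)) = ∫ ω, f ω * max (e ω) 0 ∂P := by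
    rw [integral_withDensity_eq_integral_toReal_smul₀ he.1.aemeasurable.ennreal_ofReal
      (ae_of_all _ fun _ => ENNReal.ofReal_lt_top)]
    simp only [ENNReal.toReal_ofReal', smul_eq_mul, mul_comm]
  rw [hdensity d hd, hdensity (fun ω => -d ω) hd.neg, ← integral_sub
    (hd.pos_part.bdd_mul hf (ae_of_all _ hfC)) (hd.neg_part.bdd_mul hf (ae_of_all _ hfC))]
  simp only [← mul_sub, max_zero_sub_eq_self]

lemma setIntegral_preimage_eq_zero_of_forall_integral_restrict_mul_eq_zero {W : Ω → T → E}
    (hW : Measurable W) {d : Ω → ℝ} (hd : Integrable d P)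
    (h : ∀ (I : Finset T) (g : (I → E) →ᵇ ℝ), ∫ ω, g (I.restrict (W ω)) * d ω ∂P = 0)
    {B : Set (T → E)} (hB : MeasurableSet B) : ∫ ω in W ⁻¹' B, d ω ∂P = 0 := by
  set μpos := P.withDensity fun ω => ENNReal.ofReal (d ω)
  set μneg := P.withDensity fun ω => ENNReal.ofReal (-d ω)
  have : IsFiniteMeasure μpos := isFiniteMeasure_withDensity_ofReal hd.2
  have : IsFiniteMeasure μneg := isFiniteMeasure_withDensity_ofReal hd.neg.2
  have hmap : μpos.map W = μneg.map W := by
    refine ext_of_forall_integral_restrict_eq fun I g => ?_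
    have hg : Measurable fun x : T → E => g (I.restrict x) :=
      g.continuous.measurable.comp I.measurable_restrict
    rw [integral_map hW.aemeasurable hg.aestronglyMeasurable,
      integral_map hW.aemeasurable hg.aestronglyMeasurable, ← sub_eq_zero, ← h I g]
    exact integral_withDensity_ofReal_sub_integral_withDensity_ofReal_neg
      (hg.comp hW).aestronglyMeasurable (fun ω => g.norm_coe_le_norm _) hd
  have hpreimage : μpos.real (W ⁻¹' B) = μneg.real (W ⁻¹' B) := by
    rw [← map_measureReal_apply hW hB, ← map_measureReal_apply hW hB, hmap]
  have hWB : MeasurableSet (W ⁻¹' B) := hW hB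
  have hindicator := integral_withDensity_ofReal_sub_integral_withDensity_ofReal_neg
    (f := (W ⁻¹' B).indicator 1) (C := 1)
    (measurable_one.indicator hWB).aestronglyMeasurable
    (fun ω => by simpa using norm_indicator_le_norm_self (1 : Ω → ℝ) ω) hd
  rw [integral_indicator_one hWB, integral_indicator_one hWB, hpreimage, sub_self] at hindicator
  rw [← integral_indicator hWB, hindicator]
  simp only [← indicator_mul_left, Pi.one_apply, one_mul]

lemma condExp_comap_ae_eq_of_forall_integral_restrict_mul_eq [IsFiniteMeasure P] {W : Ω → T → E}
    (hW : Measurable W) (ha : Integrable a P) (hb : Integrable b P)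
    (hbW : StronglyMeasurable[MeasurableSpace.comap W inferInstance] b)
    (h : ∀ (I : Finset T) (g : (I → E) →ᵇ ℝ),
      ∫ ω, g (I.restrict (W ω)) * a ω ∂P = ∫ ω, g (I.restrict (W ω)) * b ω ∂P) :
    P[a | MeasurableSpace.comap W inferInstance] =ᵐ[P] b := by
  refine (ae_eq_condExp_of_forall_setIntegral_eq hW.comap_le ha (fun _ _ _ => hb.integrableOn) ?_
    hbW.aestronglyMeasurable).symm
  rintro _ ⟨B, hB, rfl⟩ -
  rw [← sub_eq_zero, ← integral_sub hb.integrableOn ha.integrableOn]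
  refine setIntegral_preimage_eq_zero_of_forall_integral_restrict_mul_eq_zero hW (hb.sub ha)
    (fun I g => ?_) hB
  have hg : AEStronglyMeasurable (fun ω => g (I.restrict (W ω))) P :=
    (g.continuous.measurable.comp (I.measurable_restrict.comp hW)).aestronglyMeasurable
  have hgC : ∀ᵐ ω ∂P, ‖g (I.restrict (W ω))‖ ≤ ‖g‖ := ae_of_all _ fun ω => g.norm_coe_le_norm _
  simp only [Pi.sub_apply, mul_sub]
  rw [integral_sub (hb.bdd_mul hg hgC) (ha.bdd_mul hg hgC), h I g, sub_self]

end CylinderFunctions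

lemma integral_mul_eq_of_condExp_ae_eq {Ω : Type*} {m m₀ : MeasurableSpace Ω} {P : Measure Ω}
    [IsFiniteMeasure P] (hm : m ≤ m₀) {f a b : Ω → ℝ} {C : ℝ}
    (hf : StronglyMeasurable[m] f) (hfC : ∀ ω, |f ω| ≤ C) (ha : Integrable a P)
    (hab : P[a | m] =ᵐ[P] b) : ∫ ω, f ω * a ω ∂P = ∫ ω, f ω * b ω ∂P := by
  have hfa : Integrable (f * a) P := ha.bdd_mul (hf.mono hm).aestronglyMeasurable (ae_of_all _ hfC)
  have hpull : P[f * a | m] =ᵐ[P] f * b :=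
    (condExp_mul_of_stronglyMeasurable_left hf hfa ha).trans (hab.mono fun ω hω => by
      simp only [Pi.mul_apply, hω])
  calc ∫ ω, f ω * a ω ∂P = ∫ ω, (P[f * a | m]) ω ∂P := (integral_condExp hm).symm
    _ = ∫ ω, f ω * b ω ∂P := integral_congr_ae hpull

lemma stronglyAdapted_natural_comp {T Ω E : Type*} [Preorder T] [MeasurableSpace Ω]
    [TopologicalSpace E] [MetrizableSpace E] [MeasurableSpace E] [BorelSpace E] {Z : T → Ω → E}
    (hZ : ∀ t, StronglyMeasurable (Z t)) {φ : T → E → ℝ} (hφ : ∀ t, Continuous (φ t)) :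
    StronglyAdapted (Filtration.natural Z hZ) fun t ω => φ t (Z t ω) :=
  fun t => (hφ t).comp_stronglyMeasurable (Filtration.stronglyAdapted_natural hZ t)

lemma integral_mul_eq_of_martingale_natural {T Ω E κ : Type*} [Preorder T] [Finite κ]
    {m₀ : MeasurableSpace Ω} {P : Measure Ω} [IsFiniteMeasure P] [TopologicalSpace E]
    [MetrizableSpace E] [SecondCountableTopology E] [MeasurableSpace E] [BorelSpace E]
    {Z : T → Ω → E} {hZ : ∀ t, StronglyMeasurable (Z t)} {N : T → Ω → ℝ}
    (hN : Martingale N (Filtration.natural Z hZ) P) {s t : T} (hst : s ≤ t) (τ : κ → Iic s)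
    (g : (κ → E) →ᵇ ℝ) :
    ∫ ω, g (fun u => Z (τ u) ω) * N t ω ∂P = ∫ ω, g (fun u => Z (τ u) ω) * N s ω ∂P := by
  have hpast : Measurable[Filtration.natural Z hZ s] fun ω u => Z (τ u) ω :=
    @measurable_pi_lambda _ _ _ (Filtration.natural Z hZ s) _ _ fun u =>
      ((Filtration.stronglyAdapted_natural hZ (τ u)).mono
        ((Filtration.natural Z hZ).mono (τ u).2)).measurable
  exact integral_mul_eq_of_condExp_ae_eq ((Filtration.natural Z hZ).le s)
    (g.continuous.measurable.comp hpast).stronglyMeasurable (fun ω => g.norm_coe_le_norm _)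
    (hN.integrable t) (hN.condExp_ae_eq hst)

section FiniteDimensionalDistributions

variable {T ι E : Type*} [TopologicalSpace E] [SecondCountableTopology E] [MeasurableSpace E]
  [BorelSpace E] {l : Filter ι} [l.NeBot] {Ω : ι → Type*} [∀ i, MeasurableSpace (Ω i)]
  {P : ∀ i, Measure (Ω i)} [∀ i, IsProbabilityMeasure (P i)] {Ω₀ : Type*} [MeasurableSpace Ω₀]
  {P₀ : Measure Ω₀} [IsProbabilityMeasure P₀] {Z : ∀ i, T → Ω i → E} {Z₀ : T → Ω₀ → E}

lemma tendsto_integral_mul_of_tendstoInDistribution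
    (hfdd : ∀ I : Finset T,
      TendstoInDistribution (fun i ω (t : I) => Z i t ω) l (fun ω t => Z₀ t ω) P P₀)
    {κ : Type*} [Finite κ] (τ : κ → T) (g : (κ → E) →ᵇ ℝ) {t : T} {φ : E → ℝ} (hφ : Continuous φ)
    (hint : ∀ i, Integrable (fun ω => φ (Z i t ω)) (P i))
    (hUI : AsymptoticallyUniformIntegrable (fun i ω => φ (Z i t ω)) l P) :
    Tendsto (fun i => ∫ ω, g (fun u => Z i (τ u) ω) * φ (Z i t ω) ∂P i) l
      (𝓝 (∫ ω, g (fun u => Z₀ (τ u) ω) * φ (Z₀ t ω) ∂P₀)) := by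
  classical
  cases nonempty_fintype κ
  let J : Finset T := insert t (Finset.univ.image τ)
  have ht : t ∈ J := Finset.mem_insert_self _ _
  have hτ (u : κ) : τ u ∈ J :=
    Finset.mem_insert_of_mem (Finset.mem_image_of_mem τ (Finset.mem_univ u))
  have hjoint : TendstoInDistribution (fun i ω => ((fun u => Z i (τ u) ω), Z i t ω)) l
      (fun ω => ((fun u => Z₀ (τ u) ω), Z₀ t ω)) P P₀ :=
    (hfdd J).continuous_comp
      (show Continuous fun x : J → E => ((fun u => x ⟨τ u, hτ u⟩), x ⟨t, ht⟩) by fun_prop)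
  have hg_meas (i) : AEStronglyMeasurable (fun ω => g fun u => Z i (τ u) ω) (P i) :=
    (g.continuous.measurable.comp_aemeasurable
      (hjoint.forall_aemeasurable i).fst).aestronglyMeasurable
  have hg_bound (x : κ → E) : |g x| ≤ ‖g‖ := g.norm_coe_le_norm x
  exact tendsto_integral_of_tendstoInDistribution
    (hjoint.continuous_comp (show Continuous fun x : (κ → E) × E => g x.1 * φ x.2 by fun_prop))
    (fun i => (hint i).bdd_mul (hg_meas i) (ae_of_all _ fun ω => hg_bound _))
    (hUI.bdd_mul hint fun i ω => hg_bound _)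

theorem preservation_of_martingale_property_under_UI_general [Preorder T] [MetrizableSpace E]
    (hZ : ∀ i t, StronglyMeasurable (Z i t)) (hZ₀ : ∀ t, StronglyMeasurable (Z₀ t))
    {φ : T → E → ℝ} (hφ : ∀ t, Continuous (φ t))
    (hmart : ∀ i,
      Martingale (fun t ω => φ t (Z i t ω)) (Filtration.natural (Z i) (hZ i)) (P i))
    (hfdd : ∀ I : Finset T,
      TendstoInDistribution (fun i ω (t : I) => Z i t ω) l (fun ω t => Z₀ t ω) P P₀)
    (hUI : ∀ t, AsymptoticallyUniformIntegrable (fun i ω => φ t (Z i t ω)) l P) :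
    Martingale (fun t ω => φ t (Z₀ t ω)) (Filtration.natural Z₀ hZ₀) P₀ := by
  have hadapted := stronglyAdapted_natural_comp hZ₀ hφ
  have hmarginal (t) :
      TendstoInDistribution (fun i ω => φ t (Z i t ω)) l (fun ω => φ t (Z₀ t ω)) P P₀ :=
    (hfdd {t}).continuous_comp
      (g := fun x : ({t} : Finset T) → E => φ t (x ⟨t, Finset.mem_singleton_self t⟩)) (by fun_prop)
  have hint (t) : Integrable (fun ω => φ t (Z₀ t ω)) P₀ :=
    integrable_of_tendstoInDistribution (hmarginal t) (fun i => (hmart i).integrable t) (hUI t)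
  have hlim {s : T} (I : Finset (Iic s)) (g : (I → E) →ᵇ ℝ) (t : T) :=
    tendsto_integral_mul_of_tendstoInDistribution hfdd (fun u : I => (u : Iic s)) g (hφ t)
      (fun i => (hmart i).integrable t) (hUI t)
  refine ⟨hadapted, fun s t hst => ?_⟩
  have hs := hadapted s
  rw [Filtration.natural_eq_comap] at hs ⊢
  refine condExp_comap_ae_eq_of_forall_integral_restrict_mul_eq
    (measurable_pi_lambda _ fun u => (hZ₀ u).measurable) (hint t) (hint s) hs fun I g => ?_
  refine tendsto_nhds_unique (hlim I g t) ((hlim I g s).congr fun i => ?_)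
  exact (integral_mul_eq_of_martingale_natural (hmart i) hst (fun u : I => (u : Iic s)) g).symm

end FiniteDimensionalDistributions

/-- Preservation of the martingale property under uniform integrability
(continuous-path version): if `(X n, M n)` are random elements of the space of
continuous paths `C([0,∞), ℝ^k) × C([0,∞), ℝ)` (compact-open topology, i.e.
uniform convergence on compacts), `M n` is a martingale with respect to the
filtration generated by `(X n, M n)`, the laws of `(X n, M n)` converge weakly
to the law of `(X₀, M₀)`, and for each `t` the family `{M n (t)}` is uniformly
integrable, then `M₀` is a martingale with respect to the filtration generated
by `(X₀, M₀)`. -/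
theorem preservation_of_martingale_property_under_UI
    (k : ℕ)
    (Ω : ℕ → Type*) [∀ n, MeasurableSpace (Ω n)]
    (P : ∀ n, Measure (Ω n)) [∀ n, IsProbabilityMeasure (P n)]
    {Ω₀ : Type*} [MeasurableSpace Ω₀] (P₀ : Measure Ω₀) [IsProbabilityMeasure P₀]
    (X : ∀ n, Ω n → C(ℝ≥0, Fin k → ℝ)) (M : ∀ n, Ω n → C(ℝ≥0, ℝ))
    (X₀ : Ω₀ → C(ℝ≥0, Fin k → ℝ)) (M₀ : Ω₀ → C(ℝ≥0, ℝ))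
    (hmeas : ∀ n (t : ℝ≥0), Measurable (fun ω => (X n ω t, M n ω t)))
    (hmeas₀ : ∀ t : ℝ≥0, Measurable (fun ω => (X₀ ω t, M₀ ω t)))
    (hint : ∀ n (t : ℝ≥0), Integrable (fun ω => M n ω t) (P n))
    (hmart : ∀ n (s t : ℝ≥0), s ≤ t →
      (P n)[fun ω => M n ω t |
          ⨆ u ∈ Iic s, MeasurableSpace.comap (fun ω => (X n ω u, M n ω u)) inferInstance]
        =ᵐ[P n] fun ω => M n ω s)
    (hconv : ∀ f : BoundedContinuousFunction (C(ℝ≥0, Fin k → ℝ) × C(ℝ≥0, ℝ)) ℝ,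
      Tendsto (fun n => ∫ ω, f (X n ω, M n ω) ∂(P n)) atTop
        (𝓝 (∫ ω, f (X₀ ω, M₀ ω) ∂P₀)))
    (hUI : ∀ t : ℝ≥0, ∀ ε : ℝ, 0 < ε → ∃ c : ℝ, ∀ n,
      ∫ ω in {ω | c ≤ |M n ω t|}, |M n ω t| ∂(P n) ≤ ε) :
    (∀ t : ℝ≥0, Integrable (fun ω => M₀ ω t) P₀)
    ∧ (∀ s t : ℝ≥0, s ≤ t →
        P₀[fun ω => M₀ ω t |
            ⨆ u ∈ Iic s, MeasurableSpace.comap (fun ω => (X₀ ω u, M₀ ω u)) inferInstance]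
          =ᵐ[P₀] fun ω => M₀ ω s) := by
  have hZ (n t) : StronglyMeasurable fun ω => (X n ω t, M n ω t) := (hmeas n t).stronglyMeasurable
  have hZ₀ (t) : StronglyMeasurable fun ω => (X₀ ω t, M₀ ω t) := (hmeas₀ t).stronglyMeasurable
  have hfdd (I : Finset ℝ≥0) :
      TendstoInDistribution (fun n ω (t : I) => (X n ω t, M n ω t)) atTop
        (fun ω t => (X₀ ω t, M₀ ω t)) P P₀ :=
    tendstoInDistribution_comp_of_forall_integral_tendsto hconv
      (F := fun w (t : I) => (w.1 t, w.2 t)) (by fun_prop)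
      (fun n => (measurable_pi_lambda _ fun t : I => hmeas n t).aemeasurable)
      (measurable_pi_lambda _ fun t : I => hmeas₀ t).aemeasurable
  have hM₀ := preservation_of_martingale_property_under_UI_general hZ hZ₀
    (φ := fun _ => Prod.snd) (fun _ => continuous_snd)
    (fun n => ⟨stronglyAdapted_natural_comp (hZ n) fun _ => continuous_snd, hmart n⟩) hfdd
    fun t ε hε => (hUI t ε hε).imp fun c hc => .of_forall hc
  exact ⟨hM₀.integrable, fun s t hst => hM₀.condExp_ae_eq hst⟩
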